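/- Reciprocity of the deterministic regions. Let K ≥ 1 and let n_00, n_11, …, n_KK and n_10, …, n_K0 be nonnegative integers, and write x⁺ = max(x,0). Define in ℝ^{K+1} the one-to-many region D = {(r_0,…,r_K) : 0 ≤ r_i ≤ n_ii for all 0 ≤ i ≤ K, and for every nonempty S ⊆ {1,…,K}, r_0 + Σ_{i∈S} r_i ≤ n_00 + Σ_{k=1}^{n_00} (|U_k^OTM ∩ S| − 1)⁺ + Σ_{i∈S} [(n_ii − n_i0)⁺ + (n_i0 − n_00)⁺]}, where U_k^OTM = {i : n_00 − n_i0 < k ≤ n_ii − n_i0 + n_00}. Define also the many-to-one outer-bound region C̄ of the reciprocal channel with direct gains ñ_ii = n_ii and cross gains ñ_0i = n_i0, namely C̄ = {r : 0 ≤ r_i ≤ n_ii for all i, and for every nonempty S, r_0 + Σ_{i∈S} r_i ≤ Σ_{i∈S}[(n_ii − n_i0)⁺ + (n_i0 − n_00)⁺] + Σ_{k=1}^{n_00} max(|Ũ_k ∩ S|, 1)}, where Ũ_k = {i : n_i0 − n_ii < k ≤ n_i0}. Then D = C̄: the capacity region of the deterministic one-to-many channel coincides with that of the reciprocal deterministic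 many-to-one channel. -/

import Mathlib

open Finset

/-- One-to-many channel: the set of users (`i ≠ 0`) experiencing interference from level `k`
of transmitter 0, `U_k^OTM = {i : n_{00} − n_{i0} < k ≤ n_{ii} − n_{i0} + n_{00}}`.
Here `n i = n_{ii}` (direct gains) and `g i = n_{i0}` (cross gains). -/
def UOTM (K : ℕ) (n g : Fin (K + 1) → ℕ) (k : ℕ) : Finset (Fin (K + 1)) :=
  Finset.univ.filter fun i => i ≠ 0 ∧
    (n 0 : ℤ) - (g i : ℤ) < (k : ℤ) ∧ (k : ℤ) ≤ (n i : ℤ) - (g i : ℤ) + (n 0 : ℤ)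

/-- Reciprocal many-to-one channel: the set of users causing interference on level `k` of
receiver 0, `Ũ_k = {i : n_{i0} − n_{ii} < k ≤ n_{i0}}`. -/
def Utilde (K : ℕ) (n g : Fin (K + 1) → ℕ) (k : ℕ) : Finset (Fin (K + 1)) :=
  Finset.univ.filter fun i => i ≠ 0 ∧
    (g i : ℤ) - (n i : ℤ) < (k : ℤ) ∧ (k : ℤ) ≤ (g i : ℤ)

/-- `(n_{ii} − n_{i0})⁺ + (n_{i0} − n_{00})⁺` (truncated subtraction on ℕ). -/
def ffreeOTM (K : ℕ) (n g : Fin (K + 1) → ℕ) (i : Fin (K + 1)) : ℕ :=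
  (n i - g i) + (g i - n 0)

/-- The one-to-many deterministic region `D`. -/
def DRegion (K : ℕ) (n g : Fin (K + 1) → ℕ) : Set (Fin (K + 1) → ℝ) :=
  {r | (∀ i, 0 ≤ r i ∧ r i ≤ (n i : ℝ)) ∧
    ∀ S : Finset (Fin (K + 1)), 0 ∉ S → S.Nonempty →
      r 0 + ∑ i ∈ S, r i ≤ (n 0 : ℝ) +
        (∑ k ∈ Finset.Icc 1 (n 0), (((UOTM K n g k ∩ S).card - 1 : ℕ) : ℝ)) +
        ∑ i ∈ S, (ffreeOTM K n g i : ℝ)}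

/-- The outer-bound region `C̄` of the reciprocal many-to-one channel (direct gains
`ñ_{ii} = n_{ii}`, cross gains `ñ_{0i} = n_{i0}`). -/
def CbarRegion (K : ℕ) (n g : Fin (K + 1) → ℕ) : Set (Fin (K + 1) → ℝ) :=
  {r | (∀ i, 0 ≤ r i ∧ r i ≤ (n i : ℝ)) ∧
    ∀ S : Finset (Fin (K + 1)), 0 ∉ S → S.Nonempty →
      r 0 + ∑ i ∈ S, r i ≤
        (∑ i ∈ S, (ffreeOTM K n g i : ℝ)) +
        ∑ k ∈ Finset.Icc 1 (n 0), (max (Utilde K n g k ∩ S).card 1 : ℝ)}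

/-- Level reflection `k ↦ n₀ + 1 - k` exchanges the two interference sets. -/
theorem UOTM_reflect (K : ℕ) (n g : Fin (K + 1) → ℕ) (k : ℕ) (hk : k ≤ n 0) :
    Utilde K n g (n 0 + 1 - k) = UOTM K n g k := by
  ext i
  simp only [Utilde, UOTM, Finset.mem_filter, Finset.mem_univ, true_and]
  refine and_congr_right fun _ => ?_
  omega

theorem sum_levels (K : ℕ) (n g : Fin (K + 1) → ℕ) (S : Finset (Fin (K + 1))) :
    (n 0 : ℝ) + (∑ k ∈ Finset.Icc 1 (n 0), (((UOTM K n g k ∩ S).card - 1 : ℕ) : ℝ)) =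
      ∑ k ∈ Finset.Icc 1 (n 0), (max (Utilde K n g k ∩ S).card 1 : ℝ) := by
  have h1 : (n 0 : ℝ) = ∑ k ∈ Finset.Icc 1 (n 0), (1 : ℝ) := by simp
  rw [h1, ← Finset.sum_add_distrib]
  refine Finset.sum_nbij' (fun k => n 0 + 1 - k) (fun k => n 0 + 1 - k) ?_ ?_ ?_ ?_ ?_
  · intro k hk; simp only [Finset.mem_Icc] at hk ⊢; omega
  · intro k hk; simp only [Finset.mem_Icc] at hk ⊢; omega
  · intro k hk; simp only [Finset.mem_Icc] at hk ⊢; omega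
  · intro k hk; simp only [Finset.mem_Icc] at hk ⊢; omega
  · intro k hk
    simp only [Finset.mem_Icc] at hk
    rw [UOTM_reflect K n g k hk.2]
    generalize (UOTM K n g k ∩ S).card = c
    have : 1 + (c - 1) = max c 1 := by omega
    exact_mod_cast this

/-- Reciprocity of the deterministic regions: the capacity region of the deterministic
one-to-many channel coincides with that of the reciprocal deterministic many-to-one
channel, `D = C̄`. -/
theorem one_to_many_reciprocity (K : ℕ) (hK : 1 ≤ K) (n g : Fin (K + 1) → ℕ) :
    DRegion K n g = CbarRegion K n g := by
  ext r
  simp only [DRegion, CbarRegion, Set.mem_setOf_eq]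
  refine and_congr_right fun _ => forall_congr' fun S => ?_
  rw [sum_levels, add_comm (∑ k ∈ Finset.Icc 1 (n 0), _)]
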